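/- Let R be a Jacobson (Hilbert) integral domain and let I be a radical ideal of R[X] which is a finite intersection of maximal ideals of R[X]. Then I is power stable. -/

import Mathlib

open Polynomial

/-- An ideal `I` of `R[X]` is power stable if for all `t ≥ 1`,
`I^t ∩ R = (I ∩ R)^t`, intersections with `R` meaning contraction along `C : R →+* R[X]`. -/
def IsPowerStable {R : Type*} [CommRing R] (I : Ideal R[X]) : Prop :=
  ∀ t : ℕ, 1 ≤ t →
    (I ^ t).comap (C : R →+* R[X]) = (I.comap (C : R →+* R[X])) ^ t

/-!
If `m = I ∩ R` is maximal, then `I ⊆ m[X] + (f)` for some monic `f ≠ 1`, because `(R/m)[X]` is a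
principal ideal domain. Hence `I^t ⊆ m^t[X] + (f)`, and the right-hand side contracts to `m^t`, as
a nonzero constant over `R/m^t` is not divisible by a monic polynomial of positive degree.

If `I ∩ R = m₁ ∩ ⋯ ∩ mₖ` with distinct maximal `mᵢ`, each `mᵢ` is minimal over `I ∩ R` and
therefore the contraction of some `Qᵢ ⊇ I`. The maximal case gives `I^t ∩ R ⊆ Qᵢ^t ∩ R = mᵢ^t`,
and `⋂ mᵢ^t = (⋂ mᵢ)^t` by comaximality. Over a Jacobson ring the maximal ideals of `R[X]` contract
to maximal ideals.
-/

section Ideals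

variable {A : Type*}

theorem sup_pow_le_pow_sup [CommSemiring A] (I J : Ideal A) (t : ℕ) :
    (I ⊔ J) ^ t ≤ I ^ t ⊔ J := by
  induction t with
  | zero => simp
  | succ n ih =>
    calc (I ⊔ J) ^ (n + 1) ≤ (I ^ n ⊔ J) * (I ⊔ J) := by
          rw [pow_succ]
          exact Ideal.mul_mono_left ih
      _ = (I ^ n * I ⊔ I ^ n * J) ⊔ J * (I ⊔ J) := by rw [Ideal.sup_mul, Ideal.mul_sup]
      _ ≤ I ^ (n + 1) ⊔ J :=
        sup_le (sup_le_sup (pow_succ I n).ge Ideal.mul_le_right)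
          (Ideal.mul_le_left.trans le_sup_right)

theorem finset_inf_pow_of_pairwise_isCoprime [CommSemiring A] {ι : Type*} {s : Finset ι}
    {J : ι → Ideal A} (hs : (s : Set ι).Pairwise fun i j => IsCoprime (J i) (J j)) (t : ℕ) :
    s.inf J ^ t = s.inf fun i => J i ^ t := by
  rw [Finset.inf_eq_iInf, Finset.inf_eq_iInf, ← Ideal.prod_eq_iInf_of_pairwise_isCoprime hs,
    ← Ideal.prod_eq_iInf_of_pairwise_isCoprime fun i hi j hj hij => (hs hi hj hij).pow,
    Finset.prod_pow]

theorem mem_minimalPrimes_finset_inf_of_isMaximal [CommSemiring A] {s : Finset (Ideal A)}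
    (hs : ∀ m ∈ s, m.IsMaximal) {m : Ideal A} (hm : m ∈ s) : m ∈ (s.inf id).minimalPrimes := by
  refine ⟨⟨(hs m hm).isPrime, Finset.inf_le hm⟩, fun p ⟨hp, hsp⟩ hpm => ?_⟩
  obtain ⟨n, hn, hnp : n ≤ p⟩ := hp.inf_le'.mp hsp
  have hnm : n = m := (hs n hn).eq_of_le (hs m hm).ne_top (hnp.trans hpm)
  exact hnm ▸ hnp

end Ideals

section Contraction

variable {R : Type*} [CommRing R]

theorem comap_C_map_C_sup_span_singleton (J : Ideal R) {f : R[X]} (hf : f.Monic) (hf1 : f ≠ 1) :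
    (J.map C ⊔ Ideal.span {f}).comap C = J := by
  refine le_antisymm (fun a ha => ?_) (Ideal.map_le_iff_le_comap.mp le_sup_left)
  by_contra haJ
  let φ := Ideal.Quotient.mk J
  have hφa : φ a ≠ 0 := mt Ideal.Quotient.eq_zero_iff_mem.mp haJ
  have : Nontrivial (R ⧸ J) := ⟨_, _, hφa⟩
  have hJ : J.map C ≤ RingHom.ker (mapRingHom φ) := by
    rw [ker_mapRingHom, Ideal.mk_ker]
  have hdvd : f.map φ ∣ C (φ a) := by
    have := Ideal.mem_map_of_mem (mapRingHom φ) (Ideal.mem_comap.mp ha)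
    rwa [Ideal.map_sup, (Ideal.map_eq_bot_iff_le_ker _).mpr hJ, bot_sup_eq, Ideal.map_span,
      Set.image_singleton, Ideal.mem_span_singleton, coe_mapRingHom, map_C] at this
  have hdeg : (C (φ a)).natDegree < (f.map φ).natDegree := by
    rw [natDegree_C, hf.natDegree_map]
    exact hf.natDegree_pos.mpr hf1
  exact (hf.map φ).not_dvd_of_natDegree_lt (C_ne_zero.mpr hφa) hdeg hdvd

theorem exists_monic_ne_one_le_map_C_sup_span_singleton {I : Ideal R[X]}
    (hI : (I.comap C).IsMaximal) :
    ∃ f : R[X], f.Monic ∧ f ≠ 1 ∧ I ≤ (I.comap C).map C ⊔ Ideal.span {f} := by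
  by_cases hext : I = (I.comap C).map C
  · have : Nontrivial R := (Submodule.nontrivial_iff R).mp ⟨_, _, hI.ne_top⟩
    exact ⟨X, monic_X, monic_X.natDegree_pos.mp (by simp), hext.le.trans le_sup_left⟩
  · obtain ⟨f, hf, hIf⟩ := exists_monic_span_sup_map_eq R I hI hext
    refine ⟨f, hf, ?_, hIf.le⟩
    rintro rfl
    refine hI.ne_top (Ideal.comap_eq_top_iff.mpr ?_)
    rw [hIf, Ideal.span_singleton_one, sup_top_eq]

theorem IsPowerStable.of_le_map_C_sup_span_singleton {I : Ideal R[X]} {f : R[X]} (hf : f.Monic)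
    (hf1 : f ≠ 1) (hI : I ≤ (I.comap C).map C ⊔ Ideal.span {f}) : IsPowerStable I := by
  intro t _
  refine le_antisymm ?_ (Ideal.le_comap_pow C t)
  have hpow : I ^ t ≤ ((I.comap C) ^ t).map C ⊔ Ideal.span {f} := by
    rw [Ideal.map_pow]
    exact (Ideal.pow_right_mono hI t).trans (sup_pow_le_pow_sup _ _ t)
  exact (Ideal.comap_mono hpow).trans (comap_C_map_C_sup_span_singleton _ hf hf1).le

theorem IsPowerStable.of_isMaximal_comap_C {I : Ideal R[X]} (hI : (I.comap C).IsMaximal) :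
    IsPowerStable I := by
  obtain ⟨f, hf, hf1, hIf⟩ := exists_monic_ne_one_le_map_C_sup_span_singleton hI
  exact .of_le_map_C_sup_span_singleton hf hf1 hIf

end Contraction

theorem stmt_12_general {R : Type*} [CommRing R] (I : Ideal R[X]) (s : Finset (Ideal R))
    (hs : ∀ m ∈ s, m.IsMaximal) (hI : I.comap C = s.inf id) : IsPowerStable I := by
  intro t ht
  refine le_antisymm ?_ (Ideal.le_comap_pow C t)
  have hcop : (s : Set (Ideal R)).Pairwise IsCoprime := fun m hm n hn hmn =>
    have := hs m hm
    have := hs n hn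
    Ideal.isCoprime_of_isMaximal hmn
  rw [hI, finset_inf_pow_of_pairwise_isCoprime (J := id) hcop]
  refine Finset.le_inf fun m hm => ?_
  have hmin : m ∈ (I.comap C).minimalPrimes := hI ▸ mem_minimalPrimes_finset_inf_of_isMaximal hs hm
  obtain ⟨Q, -, hIQ, hQ⟩ := Ideal.exists_comap_eq_of_mem_minimalPrimes C m hmin
  calc (I ^ t).comap C ≤ (Q ^ t).comap C := Ideal.comap_mono (Ideal.pow_right_mono hIQ t)
    _ = m ^ t := by rw [IsPowerStable.of_isMaximal_comap_C (hQ ▸ hs m hm) t ht, hQ]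

theorem stmt_12 {R : Type*} [CommRing R] [IsDomain R] [IsJacobsonRing R]
    (I : Ideal R[X]) (hrad : I.IsRadical)
    (s : Finset (Ideal R[X])) (hs : ∀ M ∈ s, M.IsMaximal)
    (hI : I = s.inf id) : IsPowerStable I := by
  classical
  refine stmt_12_general I (s.image (Ideal.comap C)) (Finset.forall_mem_image.mpr fun M hM => ?_) ?_
  · have := hs M hM
    exact isMaximal_comap_C_of_isJacobsonRing M
  · rw [hI, Ideal.comap_finsetInf, Finset.inf_image]
    rfl
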